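/- arXiv:2005.11115 — 2 statements merged into one kernel-verified Lean document; each statement's English description precedes it below -/
import Mathlib

section
/- Let X be a T×p real matrix, β ∈ ℝ^p, ε ∈ ℝ^T, and Y = Xβ + ε. Let 1 ≤ s ≤ 2 and λ ≥ 0, and let β̂ be a minimizer over ℝ^p of the map b ↦ (1/T)·‖Y − Xb‖₂² + λ·‖b‖_s. If ‖(2/T)·Xᵀε‖₂ ≤ λ, then (1/T)·‖X(β̂ − β)‖₂² ≤ 2λ·‖β‖_s. -/
/-!
Put `d = β̂ - β`. Comparing the objective at `β̂` with its value at `β` and expanding `‖ε - X d‖₂²`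
gives `(1/T) ‖X d‖₂² ≤ (2/T) ⟨ε, X d⟩ + λ ‖β‖_s - λ ‖β̂‖_s`. The inner product term is
`⟨(2/T) Xᵀ ε, d⟩ ≤ λ ‖d‖₂ ≤ λ (‖β̂‖₂ + ‖β‖₂)`, and `‖·‖₂ ≤ ‖·‖_s`,
which follows from the superadditivity of `x ↦ x ^ (2 / s)`, makes the `β̂` terms cancel.
Since the triangle inequality is applied in `ℓ₂`, the penalty itself need not be subadditive:
it only has to dominate the Euclidean norm.
-/

open Matrix

/-- The Euclidean norm on `Fin n → ℝ`. -/
noncomputable def euclNorm {n : ℕ} (v : Fin n → ℝ) : ℝ :=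
  ‖(EuclideanSpace.equiv (Fin n) ℝ).symm v‖

/-- The `ℓ_s`-norm on `Fin n → ℝ`. -/
noncomputable def lsNorm {n : ℕ} (s : ℝ) (v : Fin n → ℝ) : ℝ :=
  (∑ j, |v j| ^ s) ^ (1 / s)

lemma sum_rpow_le_rpow_sum {ι : Type*} (t : Finset ι) {f : ι → ℝ} (hf : ∀ i ∈ t, 0 ≤ f i)
    {q : ℝ} (hq : 1 ≤ q) : ∑ i ∈ t, f i ^ q ≤ (∑ i ∈ t, f i) ^ q := by
  induction t using Finset.cons_induction with
  | empty => simp [Real.zero_rpow (zero_lt_one.trans_le hq).ne']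
  | cons a t ha ih =>
    rw [Finset.forall_mem_cons] at hf
    rw [Finset.sum_cons, Finset.sum_cons]
    calc f a ^ q + ∑ i ∈ t, f i ^ q ≤ f a ^ q + (∑ i ∈ t, f i) ^ q := by gcongr; exact ih hf.2
      _ ≤ (f a + ∑ i ∈ t, f i) ^ q :=
        Real.add_rpow_le_rpow_add hf.1 (Finset.sum_nonneg hf.2) hq

section LsNorm

variable {n : ℕ}

lemma lsNorm_le_lsNorm_of_exponent_ge {r s : ℝ} (hr : 0 < r) (hrs : r ≤ s) (v : Fin n → ℝ) :
    lsNorm s v ≤ lsNorm r v := by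
  have hs : 0 < s := hr.trans_le hrs
  have hsum : 0 ≤ ∑ j, |v j| ^ r := Finset.sum_nonneg fun j _ => by positivity
  calc (∑ j, |v j| ^ s) ^ (1 / s) = (∑ j, (|v j| ^ r) ^ (s / r)) ^ (1 / s) := by
        simp_rw [← Real.rpow_mul (abs_nonneg _), mul_div_cancel₀ s hr.ne']
    _ ≤ ((∑ j, |v j| ^ r) ^ (s / r)) ^ (1 / s) := by
        gcongr
        exact sum_rpow_le_rpow_sum _ (fun j _ => by positivity) ((one_le_div hr).2 hrs)
    _ = (∑ j, |v j| ^ r) ^ (1 / r) := by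
        rw [← Real.rpow_mul hsum, div_mul_div_cancel₀' hs.ne', one_div]

lemma euclNorm_eq_lsNorm_two (v : Fin n → ℝ) : euclNorm v = lsNorm 2 v := by
  simp [euclNorm, lsNorm, EuclideanSpace.norm_eq, Real.sqrt_eq_rpow]

lemma euclNorm_le_lsNorm {s : ℝ} (hs0 : 0 < s) (hs2 : s ≤ 2) (v : Fin n → ℝ) :
    euclNorm v ≤ lsNorm s v :=
  (euclNorm_eq_lsNorm_two v).trans_le (lsNorm_le_lsNorm_of_exponent_ge hs0 hs2 v)

end LsNorm

lemma inner_toEuclideanLin_transpose {m n : Type*} [Fintype m] [DecidableEq m] [Fintype n]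
    [DecidableEq n] (X : Matrix m n ℝ) (w : EuclideanSpace ℝ m) (v : EuclideanSpace ℝ n) :
    inner ℝ (toEuclideanLin Xᵀ w) v = inner ℝ w (toEuclideanLin X v) := by
  rw [← conjTranspose_eq_transpose_of_trivial, toEuclideanLin_conjTranspose_eq_adjoint,
    LinearMap.adjoint_inner_left]

lemma mul_inner_toEuclideanLin_le_of_euclNorm_le {m n : ℕ} {X : Matrix (Fin m) (Fin n) ℝ}
    {ε : Fin m → ℝ} {a lam : ℝ} (h : euclNorm (a • Xᵀ.mulVec ε) ≤ lam)
    (v : EuclideanSpace ℝ (Fin n)) :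
    a * inner ℝ (WithLp.toLp 2 ε) (toEuclideanLin X v) ≤ lam * ‖v‖ :=
  calc a * inner ℝ (WithLp.toLp 2 ε) (toEuclideanLin X v)
      = inner ℝ (WithLp.toLp 2 (a • Xᵀ.mulVec ε)) v := by
        rw [WithLp.toLp_smul, real_inner_smul_left, ← inner_toEuclideanLin_transpose,
          toLpLin_apply]
    _ ≤ euclNorm (a • Xᵀ.mulVec ε) * ‖v‖ := real_inner_le_norm _ _
    _ ≤ lam * ‖v‖ := by gcongr

section InnerProductSpace

variable {F : Type*} [SeminormedAddCommGroup F] [InnerProductSpace ℝ F]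

lemma mul_norm_sub_sq_le_of_penalized_le {c P Q : ℝ} {y u w : F}
    (h : c * ‖y - w‖ ^ 2 + P ≤ c * ‖y - u‖ ^ 2 + Q) :
    c * ‖w - u‖ ^ 2 ≤ 2 * c * inner ℝ (y - u) (w - u) + (Q - P) := by
  have expand : ‖y - w‖ ^ 2 = ‖y - u‖ ^ 2 - 2 * inner ℝ (y - u) (w - u) + ‖w - u‖ ^ 2 := by
    rw [← norm_sub_sq_real, sub_sub_sub_cancel_right]
  rw [expand] at h
  linarith

/-- `hcross` is the bound `‖2c A† ε‖ ≤ lam` in dual form, so that `A` may lack an adjoint. -/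
theorem penalized_ls_basic_inequality_general {E : Type*} [SeminormedAddCommGroup E]
    [NormedSpace ℝ E] (A : E →ₗ[ℝ] F) {β βhat : E} {y ε : F} (hy : y = A β + ε)
    {pen : E → ℝ} (hpen : ∀ b, ‖b‖ ≤ pen b) {c lam : ℝ} (hlam : 0 ≤ lam)
    (hle : c * ‖y - A βhat‖ ^ 2 + lam * pen βhat ≤ c * ‖y - A β‖ ^ 2 + lam * pen β)
    (hcross : ∀ v, 2 * c * inner ℝ ε (A v) ≤ lam * ‖v‖) :
    c * ‖A (βhat - β)‖ ^ 2 ≤ 2 * lam * pen β := by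
  have noise : y - A β = ε := by rw [hy, add_sub_cancel_left]
  calc c * ‖A (βhat - β)‖ ^ 2
      ≤ 2 * c * inner ℝ ε (A (βhat - β)) + (lam * pen β - lam * pen βhat) := by
        rw [map_sub, ← noise]
        exact mul_norm_sub_sq_le_of_penalized_le hle
    _ ≤ lam * ‖βhat - β‖ + (lam * pen β - lam * pen βhat) := by grw [hcross]
    _ ≤ lam * (pen βhat + pen β) + (lam * pen β - lam * pen βhat) := by
        grw [norm_sub_le, hpen βhat, hpen β]
    _ = 2 * lam * pen β := by ring

end InnerProductSpace

/-- Deterministic basic inequality for the `ℓ_s`-penalized least squares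
estimator: if `‖(2/T)·Xᵀε‖₂ ≤ λ` then `(1/T)·‖X(β̂ − β)‖₂² ≤ 2λ·‖β‖_s`. -/
theorem penalized_ls_basic_inequality
    (T p : ℕ) (X : Matrix (Fin T) (Fin p) ℝ)
    (β : Fin p → ℝ) (ε : Fin T → ℝ) (Y : Fin T → ℝ)
    (hY : Y = X.mulVec β + ε)
    (s : ℝ) (hs1 : 1 ≤ s) (hs2 : s ≤ 2)
    (lam : ℝ) (hlam : 0 ≤ lam)
    (βhat : Fin p → ℝ)
    (hmin : ∀ b : Fin p → ℝ,
      (1 / (T : ℝ)) * euclNorm (Y - X.mulVec βhat) ^ 2 + lam * lsNorm s βhat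
        ≤ (1 / (T : ℝ)) * euclNorm (Y - X.mulVec b) ^ 2 + lam * lsNorm s b)
    (hcross : euclNorm ((2 / (T : ℝ)) • Xᵀ.mulVec ε) ≤ lam) :
    (1 / (T : ℝ)) * euclNorm (X.mulVec (βhat - β)) ^ 2 ≤ 2 * lam * lsNorm s β := by
  rw [← mul_one_div] at hcross
  -- `euclNorm` and `mulVec` unfold to the norm and `toEuclideanLin` of `EuclideanSpace`.
  exact penalized_ls_basic_inequality_general (toEuclideanLin X) (congrArg (WithLp.toLp 2) hY)
    (fun b => euclNorm_le_lsNorm (zero_lt_one.trans_le hs1) hs2 b.ofLp) hlam (hmin β)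
    (mul_inner_toEuclideanLin_le_of_euclNorm_le hcross)
end

section
/- Consider the linear model Y_t = x_tᵀβ + ε_t, t = 1,…,T, with deterministic x_t ∈ ℝ^p forming the T×p design matrix X, and real random errors ε_t such that for some C > 0, for every j ∈ {1,…,p} and x ≥ 0: P(|Σ_{t=1}^T x_{tj} ε_t| > x) ≤ 2·exp(−C·x²/(T + x·(log T)²)). Fix α ∈ (0,1), set λ = 2·C^{−1/2}·√(log(2p/α)·(p/T + √p·(log T)²/T)), and assume λ ≤ 2. Let β̂^{(ℓ_s)} be a minimizer of b ↦ (1/T)·‖Y − Xb‖₂² + λ·‖b‖_s for some 1 ≤ s ≤ 2. Then with probability at least 1 − α: (1/T)·‖X(β̂^{(ℓ_s)} − β)‖₂² ≤ 2λ·‖β‖_s. -/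
/-!
Write `δ = β̂ - β` and `Z = Xᵀε`. Comparing the objective at `β̂` and at `β` gives the basic
inequality `(1/T)‖Xδ‖² ≤ (2/T)⟨Z, δ⟩ + λ(‖β‖_s - ‖β̂‖_s)`. If every `|Z_j|` is at most
`u = λT / (2√p)`, then `⟨Z, δ⟩ ≤ u‖δ‖₁ ≤ u√p‖δ‖_s = (λT/2)‖δ‖_s`, and the triangle inequality
`‖δ‖_s ≤ ‖β̂‖_s + ‖β‖_s` leaves `2λ‖β‖_s` on the right.

The level `λ` is such that `Cu² = log(2p/α) (T + (T/√p) (log T)²)`, and `λ ≤ 2` means `u ≤ T/√p`.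
Hence the Bernstein exponent at `u` is at least `log(2p/α)`, each event `|Z_j| > u` has probability
at most `α/p`, and a union bound over the `p` coordinates concludes.
-/

open MeasureTheory Matrix

lemma euclNorm_sq_eq_dotProduct {n : ℕ} (v : Fin n → ℝ) : euclNorm v ^ 2 = v ⬝ᵥ v := by
  rw [euclNorm, EuclideanSpace.real_norm_sq_eq, dotProduct]
  exact Finset.sum_congr rfl fun i _ => sq (v i)

lemma euclNorm_sub_sq {n : ℕ} (v w : Fin n → ℝ) :
    euclNorm (v - w) ^ 2 = euclNorm v ^ 2 - 2 * (v ⬝ᵥ w) + euclNorm w ^ 2 := by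
  simp only [euclNorm_sq_eq_dotProduct, sub_dotProduct, dotProduct_sub, dotProduct_comm w v]
  ring

lemma lsNorm_nonneg {n : ℕ} (s : ℝ) (v : Fin n → ℝ) : 0 ≤ lsNorm s v := by
  unfold lsNorm
  positivity

lemma lsNorm_sub_le {n : ℕ} {s : ℝ} (hs : 1 ≤ s) (v w : Fin n → ℝ) :
    lsNorm s (v - w) ≤ lsNorm s v + lsNorm s w := by
  simpa [lsNorm, sub_eq_add_neg] using Real.Lp_add_le Finset.univ v (-w) hs

lemma sum_abs_le_rpow_mul_lsNorm {n : ℕ} {s : ℝ} (hs : 1 ≤ s) (v : Fin n → ℝ) :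
    ∑ j, |v j| ≤ (n : ℝ) ^ (1 - 1 / s) * lsNorm s v := by
  have hs0 : s ≠ 0 := by positivity
  have hpow : (∑ j, |v j|) ^ s ≤ (n : ℝ) ^ (s - 1) * ∑ j, |v j| ^ s := by
    simpa using Real.rpow_sum_le_const_mul_sum_rpow Finset.univ v hs
  calc ∑ j, |v j| = ((∑ j, |v j|) ^ s) ^ (1 / s) := by
        rw [one_div, Real.rpow_rpow_inv (by positivity) hs0]
    _ ≤ ((n : ℝ) ^ (s - 1) * ∑ j, |v j| ^ s) ^ (1 / s) := by gcongr
    _ = ((n : ℝ) ^ (s - 1)) ^ (1 / s) * lsNorm s v :=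
        Real.mul_rpow (by positivity) (by positivity)
    _ = (n : ℝ) ^ (1 - 1 / s) * lsNorm s v := by
        rw [← Real.rpow_mul n.cast_nonneg, sub_mul, mul_one_div_cancel hs0, one_mul]

lemma sum_abs_le_sqrt_mul_lsNorm {n : ℕ} {s : ℝ} (hs1 : 1 ≤ s) (hs2 : s ≤ 2) (v : Fin n → ℝ) :
    ∑ j, |v j| ≤ √n * lsNorm s v := by
  rcases n.eq_zero_or_pos with rfl | hn
  · simp
  have hn1 : (1 : ℝ) ≤ n := by exact_mod_cast hn
  have hexponent : 1 - 1 / s ≤ 1 / 2 := by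
    have : 1 / 2 ≤ 1 / s := one_div_le_one_div_of_le (by positivity) hs2
    linarith
  calc ∑ j, |v j| ≤ (n : ℝ) ^ (1 - 1 / s) * lsNorm s v := sum_abs_le_rpow_mul_lsNorm hs1 v
    _ ≤ (n : ℝ) ^ (1 / 2 : ℝ) * lsNorm s v :=
        mul_le_mul_of_nonneg_right (Real.rpow_le_rpow_of_exponent_le hn1 hexponent)
          (lsNorm_nonneg s v)
    _ = √n * lsNorm s v := by rw [Real.sqrt_eq_rpow]

lemma dotProduct_le_mul_sum_abs {ι : Type*} [Fintype ι] {z : ι → ℝ} {u : ℝ}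
    (hz : ∀ j, |z j| ≤ u) (v : ι → ℝ) : z ⬝ᵥ v ≤ u * ∑ j, |v j| := by
  rw [dotProduct, Finset.mul_sum]
  refine Finset.sum_le_sum fun j _ => ?_
  calc z j * v j ≤ |z j| * |v j| := (le_abs_self _).trans_eq (abs_mul _ _)
    _ ≤ u * |v j| := by gcongr; exact hz j

section PenalizedLeastSquares

variable {T p : ℕ} {X : Matrix (Fin T) (Fin p) ℝ} {β b : Fin p → ℝ} {e : Fin T → ℝ}
  {a lam : ℝ} {pen : (Fin p → ℝ) → ℝ}

lemma penalized_ls_basic_inequality_s17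
    (hobj : a * euclNorm (X *ᵥ β + e - X *ᵥ b) ^ 2 + lam * pen b
      ≤ a * euclNorm (X *ᵥ β + e - X *ᵥ β) ^ 2 + lam * pen β) :
    a * euclNorm (X *ᵥ (b - β)) ^ 2
      ≤ 2 * a * ((Xᵀ *ᵥ e) ⬝ᵥ (b - β)) + lam * (pen β - pen b) := by
  have hresidual : X *ᵥ β + e - X *ᵥ b = e - X *ᵥ (b - β) := by
    rw [mulVec_sub]
    abel
  have hadjoint : e ⬝ᵥ X *ᵥ (b - β) = (Xᵀ *ᵥ e) ⬝ᵥ (b - β) := by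
    rw [dotProduct_mulVec, mulVec_transpose]
  rw [hresidual, add_sub_cancel_left, euclNorm_sub_sq, hadjoint] at hobj
  linarith

lemma penalized_ls_error_le_of_score_le (hlam : 0 ≤ lam)
    (hpen : ∀ v w, pen (v - w) ≤ pen v + pen w)
    (hscore : ∀ v, 2 * a * ((Xᵀ *ᵥ e) ⬝ᵥ v) ≤ lam * pen v)
    (hobj : a * euclNorm (X *ᵥ β + e - X *ᵥ b) ^ 2 + lam * pen b
      ≤ a * euclNorm (X *ᵥ β + e - X *ᵥ β) ^ 2 + lam * pen β) :
    a * euclNorm (X *ᵥ (b - β)) ^ 2 ≤ 2 * lam * pen β :=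
  calc a * euclNorm (X *ᵥ (b - β)) ^ 2
      ≤ 2 * a * ((Xᵀ *ᵥ e) ⬝ᵥ (b - β)) + lam * (pen β - pen b) :=
        penalized_ls_basic_inequality_s17 hobj
    _ ≤ lam * (pen b + pen β) + lam * (pen β - pen b) := by
        refine add_le_add_left ((hscore _).trans ?_) _
        gcongr
        exact hpen b β
    _ = 2 * lam * pen β := by ring

end PenalizedLeastSquares

/-- The bound on `|(Xᵀε)_j|` under which the penalty `lam * ‖·‖_s` dominates the noise, for sample
size `T` and dimension `p`. -/
noncomputable def scoreThreshold (T p lam : ℝ) : ℝ :=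
  lam * T / (2 * √p)

lemma scoreThreshold_nonneg {T p lam : ℝ} (hT : 0 ≤ T) (hlam : 0 ≤ lam) :
    0 ≤ scoreThreshold T p lam := by
  unfold scoreThreshold
  positivity

/-- Only an inequality, because the left-hand side is `0` when `T = 0` or `p = 0`. -/
lemma scoreThreshold_mul_sqrt_le {T p lam : ℝ} (hlam : 0 ≤ lam) :
    2 * (1 / T) * (scoreThreshold T p lam * √p) ≤ lam :=
  calc 2 * (1 / T) * (scoreThreshold T p lam * √p) = lam * ((T / T) * (√p / √p)) := by
        unfold scoreThreshold
        ring
    _ ≤ lam * (1 * 1) := by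
        gcongr
        exacts [div_self_le_one T, div_self_le_one √p]
    _ = lam := by ring

lemma lsNorm_penalized_mspe_le_of_abs_score_le {T p : ℕ} {X : Matrix (Fin T) (Fin p) ℝ}
    {β b : Fin p → ℝ} {e : Fin T → ℝ} {lam s : ℝ} (hs1 : 1 ≤ s) (hs2 : s ≤ 2) (hlam : 0 ≤ lam)
    (hscore : ∀ j, |(Xᵀ *ᵥ e) j| ≤ scoreThreshold T p lam)
    (hobj : (1 / (T : ℝ)) * euclNorm (X *ᵥ β + e - X *ᵥ b) ^ 2 + lam * lsNorm s b
      ≤ (1 / (T : ℝ)) * euclNorm (X *ᵥ β + e - X *ᵥ β) ^ 2 + lam * lsNorm s β) :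
    (1 / (T : ℝ)) * euclNorm (X *ᵥ (b - β)) ^ 2 ≤ 2 * lam * lsNorm s β := by
  refine penalized_ls_error_le_of_score_le hlam (lsNorm_sub_le hs1) (fun v => ?_) hobj
  have hu := scoreThreshold_nonneg (p := p) T.cast_nonneg hlam
  have hv := lsNorm_nonneg s v
  calc 2 * (1 / (T : ℝ)) * ((Xᵀ *ᵥ e) ⬝ᵥ v)
      ≤ 2 * (1 / (T : ℝ)) * (scoreThreshold T p lam * ∑ j, |v j|) := by
        gcongr
        exact dotProduct_le_mul_sum_abs hscore v
    _ ≤ 2 * (1 / (T : ℝ)) * (scoreThreshold T p lam * (√p * lsNorm s v)) := by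
        gcongr
        exact sum_abs_le_sqrt_mul_lsNorm hs1 hs2 v
    _ = 2 * (1 / (T : ℝ)) * (scoreThreshold T p lam * √p) * lsNorm s v := by ring
    _ ≤ lam * lsNorm s v := by
        gcongr
        exact scoreThreshold_mul_sqrt_le hlam

lemma le_bernstein_exponent_scoreThreshold {T p C L l lam : ℝ} (hT : 0 < T) (hp : 0 < p)
    (hL : 0 ≤ L) (hl : 0 ≤ l) (hlam0 : 0 ≤ lam) (hlam2 : lam ≤ 2)
    (hlam : C * lam ^ 2 = 4 * (L * (p / T + √p * l / T))) :
    L ≤ C * scoreThreshold T p lam ^ 2 / (T + scoreThreshold T p lam * l) := by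
  have hu0 := scoreThreshold_nonneg (p := p) hT.le hlam0
  have hu : scoreThreshold T p lam ≤ T / √p :=
    calc lam * T / (2 * √p) ≤ 2 * T / (2 * √p) := by gcongr
      _ = T / √p := mul_div_mul_left _ _ two_ne_zero
  have hsq : C * scoreThreshold T p lam ^ 2 = L * (T + T / √p * l) := by
    have hr : √p ≠ 0 := (Real.sqrt_pos.mpr hp).ne'
    rw [scoreThreshold, div_pow, mul_pow, ← mul_div_assoc, ← mul_assoc, hlam]
    nth_rewrite 1 [← Real.sq_sqrt hp.le]
    field_simp
    ring
  rw [le_div_iff₀ (by positivity), hsq]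
  gcongr

lemma mul_sq_two_mul_rpow_neg_half_mul_sqrt {C x : ℝ} (hC : 0 < C) (hx : 0 ≤ x) :
    C * (2 * C ^ (-(1 : ℝ) / 2) * √x) ^ 2 = 4 * x := by
  have hpow : (C ^ (-(1 : ℝ) / 2)) ^ 2 = C⁻¹ := by
    rw [← Real.rpow_mul_natCast hC.le, ← Real.rpow_neg_one]
    norm_num
  rw [mul_pow, mul_pow, Real.sq_sqrt hx, hpow]
  field_simp
  ring

lemma bernstein_tail_scoreThreshold_le {T p C l α lam : ℝ} (hT : 0 < T) (hp : 0 < p) (hC : 0 < C)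
    (hl : 0 ≤ l) (hα0 : 0 < α) (hα : α ≤ 2 * p) (hlam2 : lam ≤ 2)
    (hlam : lam = 2 * C ^ (-(1 : ℝ) / 2) * √(Real.log (2 * p / α) * (p / T + √p * l / T))) :
    2 * Real.exp (-(C * scoreThreshold T p lam ^ 2) / (T + scoreThreshold T p lam * l))
      ≤ α / p := by
  have hL : 0 ≤ Real.log (2 * p / α) := Real.log_nonneg ((one_le_div hα0).mpr hα)
  have hlam0 : 0 ≤ lam := by rw [hlam]; positivity
  have hlam_sq : C * lam ^ 2 = 4 * (Real.log (2 * p / α) * (p / T + √p * l / T)) := by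
    rw [hlam, mul_sq_two_mul_rpow_neg_half_mul_sqrt hC (by positivity)]
  calc 2 * Real.exp (-(C * scoreThreshold T p lam ^ 2) / (T + scoreThreshold T p lam * l))
      ≤ 2 * Real.exp (-Real.log (2 * p / α)) := by
        rw [neg_div]
        gcongr
        exact le_bernstein_exponent_scoreThreshold hT hp hL hl hlam0 hlam2 hlam_sq
    _ = α / p := by
        rw [Real.exp_neg, Real.exp_log (by positivity)]
        field_simp

lemma measure_univ_sub_le_measure_iInter {Ω ι : Type*} [MeasurableSpace Ω] [Fintype ι]
    (μ : Measure Ω) (A : ι → Set Ω) {a : ENNReal}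
    (hA : ∀ i, μ (A i)ᶜ ≤ a / Fintype.card ι) :
    μ Set.univ - a ≤ μ (⋂ i, A i) := by
  have hcompl : μ (⋂ i, A i)ᶜ ≤ a :=
    calc μ (⋂ i, A i)ᶜ = μ (⋃ i, (A i)ᶜ) := by rw [Set.compl_iInter]
      _ ≤ ∑ i, μ (A i)ᶜ := measure_iUnion_fintype_le μ _
      _ ≤ ∑ _i : ι, a / Fintype.card ι := Finset.sum_le_sum fun i _ => hA i
      _ = Fintype.card ι * (a / Fintype.card ι) := by simp
      _ ≤ a := ENNReal.mul_div_le
  exact tsub_le_iff_right.mpr ((measure_univ_le_add_compl _).trans (by gcongr))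

/-- Sample prediction error bound for `ℓ_s`-penalized least squares
under geometric weak dependence: with the stated choice of `λ`, with probability at
least `1 − α`, `(1/T)·‖X(β̂^{(ℓ_s)} − β)‖₂² ≤ 2λ·‖β‖_s`. -/
theorem penalized_ls_mspe_bound_geometric
    {Ω : Type*} [MeasurableSpace Ω] (P : Measure Ω) [IsProbabilityMeasure P]
    (T p : ℕ) (X : Matrix (Fin T) (Fin p) ℝ)
    (β : Fin p → ℝ) (ε : Ω → Fin T → ℝ)
    (C : ℝ) (hC : 0 < C)
    (hexp : ∀ j : Fin p, ∀ u : ℝ, 0 ≤ u →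
      P {ω | u < |∑ t, X t j * ε ω t|}
        ≤ ENNReal.ofReal
            (2 * Real.exp (-(C * u ^ 2) / ((T : ℝ) + u * Real.log T ^ 2))))
    (α : ℝ) (hα0 : 0 < α) (hα1 : α < 1)
    (lam : ℝ)
    (hlamdef : lam = 2 * C ^ (-(1 : ℝ) / 2) *
      Real.sqrt (Real.log (2 * (p : ℝ) / α) *
        ((p : ℝ) / T + Real.sqrt p * Real.log T ^ 2 / T)))
    (hlam2 : lam ≤ 2)
    (Y : Ω → Fin T → ℝ) (hY : ∀ ω, Y ω = X.mulVec β + ε ω)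
    (s : ℝ) (hs1 : 1 ≤ s) (hs2 : s ≤ 2)
    (βhat : Ω → Fin p → ℝ)
    (hmin : ∀ ω, ∀ b : Fin p → ℝ,
      (1 / (T : ℝ)) * euclNorm (Y ω - X.mulVec (βhat ω)) ^ 2 + lam * lsNorm s (βhat ω)
        ≤ (1 / (T : ℝ)) * euclNorm (Y ω - X.mulVec b) ^ 2 + lam * lsNorm s b) :
    1 - ENNReal.ofReal α
      ≤ P {ω | (1 / (T : ℝ)) * euclNorm (X.mulVec (βhat ω - β)) ^ 2
            ≤ 2 * lam * lsNorm s β} := by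
  have hlam0 : 0 ≤ lam := by rw [hlamdef]; positivity
  have hu0 := scoreThreshold_nonneg (p := p) T.cast_nonneg hlam0
  have htail (j : Fin p) :
      P {ω | |(Xᵀ *ᵥ ε ω) j| ≤ scoreThreshold T p lam}ᶜ
        ≤ ENNReal.ofReal α / Fintype.card (Fin p) := by
    simp only [Set.compl_ofPred, not_le, Fintype.card_fin]
    rcases T.eq_zero_or_pos with rfl | hT
    · simp [mulVec, scoreThreshold]
    have hT0 : (0 : ℝ) < T := by exact_mod_cast hT
    have hp1 : (1 : ℝ) ≤ p := by exact_mod_cast j.pos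
    rw [← ENNReal.ofReal_natCast p, ← ENNReal.ofReal_div_of_pos (by positivity)]
    refine (hexp j _ hu0).trans (ENNReal.ofReal_le_ofReal ?_)
    exact bernstein_tail_scoreThreshold_le hT0 (by positivity) hC (by positivity) hα0
      (by linarith) hlam2 hlamdef
  rw [← measure_univ (μ := P)]
  refine (measure_univ_sub_le_measure_iInter P _ htail).trans (measure_mono fun ω hω => ?_)
  have hobj := hmin ω β
  rw [hY ω] at hobj
  exact lsNorm_penalized_mspe_le_of_abs_score_le hs1 hs2 hlam0
    (fun j => Set.mem_iInter.mp hω j) hobj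
end
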